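/- Let F be a field of characteristic ≠ 2 and let M be a module over the affine Hecke–Clifford algebra H_2^c(F) on which x_1² and x_2² both act as zero. Then for every z ∈ M: ((1 + c_1 c_2) x_1 + (1 − c_1 c_2) x_2) z = 0 and x_1 x_2 z = 0. -/

import Mathlib

/-- Generators of the affine Hecke–Clifford algebra `H_n^c(F)` (0-indexed):
`s i` for `i : Fin (n-1)`, and `x i`, `c i` for `i : Fin n`. -/
inductive AHCGen (n : ℕ) : Type
  | s : Fin (n - 1) → AHCGen n
  | x : Fin n → AHCGen n
  | c : Fin n → AHCGen n

/-- The index `i` of the transposition `s i`, as an index in `Fin n`. -/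
def idxL {n : ℕ} (i : Fin (n - 1)) : Fin n := ⟨i.val, by have := i.isLt; omega⟩

/-- The index `i + 1`, as an index in `Fin n`. -/
def idxR {n : ℕ} (i : Fin (n - 1)) : Fin n := ⟨i.val + 1, by have := i.isLt; omega⟩

open FreeAlgebra in
/-- The defining relations of the affine Hecke–Clifford algebra `H_n^c(F)`. -/
inductive AHCRel (F : Type) [Field F] (n : ℕ) :
    FreeAlgebra F (AHCGen n) → FreeAlgebra F (AHCGen n) → Prop
  | s_sq (i : Fin (n - 1)) :
      AHCRel F n (ι F (AHCGen.s i) * ι F (AHCGen.s i)) 1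
  | s_comm (i j : Fin (n - 1)) (h : i.val + 1 < j.val ∨ j.val + 1 < i.val) :
      AHCRel F n (ι F (AHCGen.s i) * ι F (AHCGen.s j))
        (ι F (AHCGen.s j) * ι F (AHCGen.s i))
  | braid (i j : Fin (n - 1)) (h : j.val = i.val + 1) :
      AHCRel F n (ι F (AHCGen.s i) * ι F (AHCGen.s j) * ι F (AHCGen.s i))
        (ι F (AHCGen.s j) * ι F (AHCGen.s i) * ι F (AHCGen.s j))
  | x_comm (i j : Fin n) :
      AHCRel F n (ι F (AHCGen.x i) * ι F (AHCGen.x j))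
        (ι F (AHCGen.x j) * ι F (AHCGen.x i))
  | c_sq (i : Fin n) :
      AHCRel F n (ι F (AHCGen.c i) * ι F (AHCGen.c i)) 1
  | c_anticomm (i j : Fin n) (h : i ≠ j) :
      AHCRel F n (ι F (AHCGen.c i) * ι F (AHCGen.c j))
        (-(ι F (AHCGen.c j) * ι F (AHCGen.c i)))
  | s_x (i : Fin (n - 1)) :
      AHCRel F n (ι F (AHCGen.s i) * ι F (AHCGen.x (idxL i)))
        (ι F (AHCGen.x (idxR i)) * ι F (AHCGen.s i)
          - (1 + ι F (AHCGen.c (idxL i)) * ι F (AHCGen.c (idxR i))))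
  | s_x_comm (i : Fin (n - 1)) (j : Fin n) (h1 : j ≠ idxL i) (h2 : j ≠ idxR i) :
      AHCRel F n (ι F (AHCGen.s i) * ι F (AHCGen.x j))
        (ι F (AHCGen.x j) * ι F (AHCGen.s i))
  | s_c1 (i : Fin (n - 1)) :
      AHCRel F n (ι F (AHCGen.s i) * ι F (AHCGen.c (idxL i)))
        (ι F (AHCGen.c (idxR i)) * ι F (AHCGen.s i))
  | s_c2 (i : Fin (n - 1)) :
      AHCRel F n (ι F (AHCGen.s i) * ι F (AHCGen.c (idxR i)))
        (ι F (AHCGen.c (idxL i)) * ι F (AHCGen.s i))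
  | s_c_comm (i : Fin (n - 1)) (j : Fin n) (h1 : j ≠ idxL i) (h2 : j ≠ idxR i) :
      AHCRel F n (ι F (AHCGen.s i) * ι F (AHCGen.c j))
        (ι F (AHCGen.c j) * ι F (AHCGen.s i))
  | x_c_anti (i : Fin n) :
      AHCRel F n (ι F (AHCGen.x i) * ι F (AHCGen.c i))
        (-(ι F (AHCGen.c i) * ι F (AHCGen.x i)))
  | x_c_comm (i j : Fin n) (h : i ≠ j) :
      AHCRel F n (ι F (AHCGen.x i) * ι F (AHCGen.c j))
        (ι F (AHCGen.c j) * ι F (AHCGen.x i))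

/-- The affine Hecke–Clifford algebra `H_n^c(F)`: the quotient of the free
`F`-algebra on the generators by the two-sided ideal generated by the defining
relations. -/
abbrev AHC (F : Type) [Field F] (n : ℕ) := RingQuot (AHCRel F n)

/-- The generator `s i` in `H_n^c(F)`. -/
noncomputable def sE (F : Type) [Field F] (n : ℕ) (i : Fin (n - 1)) : AHC F n :=
  RingQuot.mkAlgHom F (AHCRel F n) (FreeAlgebra.ι F (AHCGen.s i))

/-- The generator `x i` in `H_n^c(F)`. -/
noncomputable def xE (F : Type) [Field F] (n : ℕ) (i : Fin n) : AHC F n :=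
  RingQuot.mkAlgHom F (AHCRel F n) (FreeAlgebra.ι F (AHCGen.x i))

/-- The generator `c i` in `H_n^c(F)`. -/
noncomputable def cE (F : Type) [Field F] (n : ℕ) (i : Fin n) : AHC F n :=
  RingQuot.mkAlgHom F (AHCRel F n) (FreeAlgebra.ι F (AHCGen.c i))

/-!
Put `e = c_i c_{i+1}` and `L = (1 + e) x_i + (1 - e) x_{i+1}`. Applying the relation for `s_i x_i`
twice gives `s_i x_i² = x_{i+1}² s_i - L`, so `L` kills every vector killed by `x_i²` and by
`x_{i+1}² s_i`. As `x_i` anticommutes with `e`, also `x_i L = (1 - e) x_i² + (1 + e) x_i x_{i+1}`.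
Hence `(1 + e) x_i x_{i+1}` kills such a vector, and `1 + e` can be cancelled because `e² = -1`
gives `(1 - e) (1 + e) = 2`.
-/

namespace AHC

section Ring

variable {R : Type*} [Ring R] {s x y c d e : R}

lemma mul_mul_mul_self_eq_neg_one (hc : c * c = 1) (hd : d * d = 1) (hcd : c * d = -(d * c)) :
    c * d * (c * d) = -1 :=
  calc c * d * (c * d) = -(d * c) * (c * d) := by rw [← hcd]
    _ = -(d * (c * c) * d) := by noncomm_ring
    _ = -1 := by rw [hc, mul_one, hd]

lemma mul_mul_eq_neg_of_anticomm_of_comm (hc : x * c = -(c * x)) (hd : x * d = d * x) :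
    x * (c * d) = -(c * d * x) := by
  rw [← mul_assoc, hc, neg_mul, mul_assoc, hd, mul_assoc]

lemma mul_mul_eq_neg_of_comm_of_anticomm (hc : x * c = c * x) (hd : x * d = -(d * x)) :
    x * (c * d) = -(c * d * x) := by
  rw [← mul_assoc, hc, mul_assoc, hd, mul_neg, mul_assoc]

lemma one_sub_mul_one_add_eq_two (he : e * e = -1) : (1 - e) * (1 + e) = 2 :=
  calc (1 - e) * (1 + e) = 1 - e * e := by noncomm_ring
    _ = 2 := by rw [he, sub_neg_eq_add, one_add_one_eq_two]

/-- With `e = c_i c_{i+1}`, `x = x_i` and `y = x_{i+1}`, this is the correction term that appears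
when `s_i` is moved past `x_i²`. -/
def crossTerm (e x y : R) : R :=
  (1 + e) * x + (1 - e) * y

lemma mul_sq_eq_sq_mul_sub_crossTerm (hs : s * x = y * s - (1 + e)) (hy : y * e = -(e * y)) :
    s * x ^ 2 = y ^ 2 * s - crossTerm e x y :=
  calc s * x ^ 2 = s * x * x := by rw [sq, mul_assoc]
    _ = y * (s * x) - (1 + e) * x := by rw [hs, sub_mul, mul_assoc, hs]
    _ = y ^ 2 * s - (y + y * e) - (1 + e) * x := by rw [hs]; noncomm_ring
    _ = y ^ 2 * s - crossTerm e x y := by rw [hy, crossTerm]; noncomm_ring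

lemma mul_crossTerm (hx : x * e = -(e * x)) (y : R) :
    x * crossTerm e x y = (1 - e) * x ^ 2 + (1 + e) * (x * y) :=
  calc x * crossTerm e x y = (x + x * e) * x + (x - x * e) * y := by
        rw [crossTerm]; noncomm_ring
    _ = (1 - e) * x ^ 2 + (1 + e) * (x * y) := by rw [hx]; noncomm_ring

variable {M : Type*} [AddCommGroup M] [Module R M] {z : M}

lemma crossTerm_smul_eq_zero (hs : s * x = y * s - (1 + e)) (hy : y * e = -(e * y))
    (hxz : x ^ 2 • z = 0) (hyz : y ^ 2 • s • z = 0) : crossTerm e x y • z = 0 := by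
  have h : crossTerm e x y = y ^ 2 * s - s * x ^ 2 := by
    rw [mul_sq_eq_sq_mul_sub_crossTerm hs hy, sub_sub_cancel]
  rw [h, sub_smul, mul_smul, mul_smul, hxz, hyz, smul_zero, sub_zero]

lemma mul_smul_eq_zero_of_crossTerm_smul (h2 : IsUnit (2 : R)) (he : e * e = -1)
    (hx : x * e = -(e * x)) (hxz : x ^ 2 • z = 0) (hL : crossTerm e x y • z = 0) :
    (x * y) • z = 0 := by
  have h : (1 + e) • (x * y) • z = 0 :=
    calc (1 + e) • (x * y) • z = (1 - e) • x ^ 2 • z + (1 + e) • (x * y) • z := by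
          rw [hxz, smul_zero, zero_add]
      _ = x • crossTerm e x y • z := by
          rw [smul_smul, smul_smul, ← add_smul, ← mul_crossTerm hx, mul_smul]
      _ = 0 := by rw [hL, smul_zero]
  rw [← h2.smul_eq_zero, ← one_sub_mul_one_add_eq_two he, mul_smul, h, smul_zero]

end Ring

section Relations

variable (F : Type) [Field F] {n : ℕ}

lemma idxL_ne_idxR (i : Fin (n - 1)) : idxL i ≠ idxR i := by
  simp [idxL, idxR]

lemma cE_mul_self (i : Fin n) : cE F n i * cE F n i = 1 := by
  simpa [cE] using RingQuot.mkAlgHom_rel F (AHCRel.c_sq (F := F) i)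

lemma cE_mul_cE_of_ne {i j : Fin n} (h : i ≠ j) :
    cE F n i * cE F n j = -(cE F n j * cE F n i) := by
  simpa [cE] using RingQuot.mkAlgHom_rel F (AHCRel.c_anticomm (F := F) i j h)

lemma xE_mul_cE_self (i : Fin n) : xE F n i * cE F n i = -(cE F n i * xE F n i) := by
  simpa [xE, cE] using RingQuot.mkAlgHom_rel F (AHCRel.x_c_anti (F := F) i)

lemma xE_mul_cE_of_ne {i j : Fin n} (h : i ≠ j) :
    xE F n i * cE F n j = cE F n j * xE F n i := by
  simpa [xE, cE] using RingQuot.mkAlgHom_rel F (AHCRel.x_c_comm (F := F) i j h)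

lemma sE_mul_xE_idxL (i : Fin (n - 1)) :
    sE F n i * xE F n (idxL i) =
      xE F n (idxR i) * sE F n i - (1 + cE F n (idxL i) * cE F n (idxR i)) := by
  simpa [sE, xE, cE] using RingQuot.mkAlgHom_rel F (AHCRel.s_x (F := F) i)

variable {F} in
lemma isUnit_two (hF : (2 : F) ≠ 0) : IsUnit (2 : AHC F n) := by
  simpa only [map_ofNat] using hF.isUnit.map (algebraMap F (AHC F n))

end Relations

end AHC

open AHC in
theorem zero_square_consequences_general {F : Type} [Field F] (hF : (2 : F) ≠ 0) {n : ℕ}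
    {M : Type*} [AddCommGroup M] [Module (AHC F n) M] (i : Fin (n - 1)) (z : M)
    (hxz : xE F n (idxL i) ^ 2 • z = 0) (hyz : xE F n (idxR i) ^ 2 • sE F n i • z = 0) :
    ((1 + cE F n (idxL i) * cE F n (idxR i)) * xE F n (idxL i)
        + (1 - cE F n (idxL i) * cE F n (idxR i)) * xE F n (idxR i)) • z = 0 ∧
    (xE F n (idxL i) * xE F n (idxR i)) • z = 0 := by
  have hne := idxL_ne_idxR i
  have he := mul_mul_mul_self_eq_neg_one (cE_mul_self F (idxL i)) (cE_mul_self F (idxR i))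
    (cE_mul_cE_of_ne F hne)
  have hx := mul_mul_eq_neg_of_anticomm_of_comm (xE_mul_cE_self F (idxL i))
    (xE_mul_cE_of_ne F hne)
  have hy := mul_mul_eq_neg_of_comm_of_anticomm (xE_mul_cE_of_ne F hne.symm)
    (xE_mul_cE_self F (idxR i))
  have hL := crossTerm_smul_eq_zero (sE_mul_xE_idxL F i) hy hxz hyz
  exact ⟨hL, mul_smul_eq_zero_of_crossTerm_smul (isUnit_two hF) he hx hxz hL⟩

/-- if `x_1²` and `x_2²` act as zero on an `H_2^c(F)`-module `M`
(char F ≠ 2), then `((1 + c_1 c_2) x_1 + (1 − c_1 c_2) x_2) z = 0` and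
`x_1 x_2 z = 0` for every `z ∈ M`. -/
theorem zero_square_consequences (F : Type) [Field F] (hF : (2 : F) ≠ 0)
    (M : Type) [AddCommGroup M] [Module (AHC F 2) M]
    (h1 : ∀ v : M, (xE F 2 0) ^ 2 • v = 0)
    (h2 : ∀ v : M, (xE F 2 1) ^ 2 • v = 0) (z : M) :
    ((1 + cE F 2 0 * cE F 2 1) * xE F 2 0
        + (1 - cE F 2 0 * cE F 2 1) * xE F 2 1) • z = 0 ∧
    (xE F 2 0 * xE F 2 1) • z = 0 :=
  zero_square_consequences_general hF 0 z (h1 z) (h2 _)
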